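/- A DCTRS R is U-WLL if and only if the TRS SR(R) is WLL (i.e., for every rule l → r of SR(R) and every variable x ∈ Var(r), x occurs exactly once in l). -/

import Mathlib

set_option autoImplicit false

/-- First-order terms over a signature `F` and variables `V`. -/
inductive Term (F : Type) (V : Type) : Type where
  | var : V → Term F V
  | app : F → List (Term F V) → Term F V

namespace Term

variable {F V G W : Type}

/-- Application of a substitution. -/
def subst (σ : V → Term F W) : Term F V → Term F W
  | .var x => σ x
  | .app f ts => .app f (ts.attach.map (fun ⟨t, _⟩ => subst σ t))

/-- Renaming of variables. -/
def rename (g : V → W) (t : Term F V) : Term F W := t.subst (fun x => .var (g x))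

/-- Mapping of function symbols. -/
def mapF (g : F → G) : Term F V → Term G V
  | .var x => .var x
  | .app f ts => .app (g f) (ts.attach.map (fun ⟨t, _⟩ => mapF g t))

/-- Number of occurrences of the variable `x` in a term. -/
def count [DecidableEq V] (x : V) : Term F V → ℕ
  | .var y => if y = x then 1 else 0
  | .app _ ts => (ts.attach.map (fun ⟨t, _⟩ => count x t)).sum

/-- The list of variables occurring in a term (with repetitions). -/
def varList : Term F V → List V
  | .var x => [x]
  | .app _ ts => ts.attach.flatMap (fun ⟨t, _⟩ => varList t)

/-- A term is linear if every variable occurs at most once in it. -/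
def Linear [DecidableEq V] (t : Term F V) : Prop := ∀ x : V, t.count x ≤ 1

/-- Well-formedness of a term with respect to an arity assignment. -/
inductive WF (ar : F → ℕ) : Term F V → Prop where
  | var (x : V) : WF ar (.var x)
  | app (f : F) (ts : List (Term F V)) :
      ts.length = ar f → (∀ t ∈ ts, WF ar t) → WF ar (.app f ts)

end Term

/-- Number of occurrences of `x` in a sequence of terms. -/
def seqCount {F V : Type} [DecidableEq V] (x : V) (ts : List (Term F V)) : ℕ :=
  (ts.map (Term.count x)).sum

/-- An oriented conditional rewrite rule `l → r ⇐ s1 ≈ t1, …, sk ≈ tk`. -/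
structure CRule (F V : Type) : Type where
  lhs : Term F V
  rhs : Term F V
  conds : List (Term F V × Term F V)

/-- A conditional term rewriting system: a set of conditional rules. -/
abbrev CTRS (F V : Type) := Set (CRule F V)

namespace CRule

variable {F V W : Type}

/-- The sequence `l, t1, …, tk` of "pattern" terms of a rule. -/
def pats (ρ : CRule F V) : List (Term F V) := ρ.lhs :: ρ.conds.map Prod.snd

/-- The sequence `r, s1, …, sk` of "source" terms of a rule. -/
def srcs (ρ : CRule F V) : List (Term F V) := ρ.rhs :: ρ.conds.map Prod.fst

/-- Weak left-linearity: `|l,t1,…,tk|_x = 1` for every `x ∈ Var(r,s1,…,sk)`. -/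
def WLL [DecidableEq V] (ρ : CRule F V) : Prop :=
  ∀ x : V, 0 < seqCount x ρ.srcs → seqCount x ρ.pats = 1

/-- Determinism: `Var(si) ⊆ Var(l, t1, …, t_{i−1})`. -/
def Det [DecidableEq V] (ρ : CRule F V) : Prop :=
  ∀ i : ℕ, ∀ h : i < ρ.conds.length, ∀ x : V,
    0 < Term.count x (ρ.conds.get ⟨i, h⟩).1 →
    0 < seqCount x (ρ.lhs :: (ρ.conds.take i).map Prod.snd)

/-- Type 3: `Var(r) ⊆ Var(l, s1, t1, …, sk, tk)`. -/
def Type3 [DecidableEq V] (ρ : CRule F V) : Prop :=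
  ∀ x : V, 0 < Term.count x ρ.rhs →
    0 < seqCount x (ρ.lhs :: ρ.conds.flatMap (fun c => [c.1, c.2]))

/-- The left-hand side is a non-variable term. -/
def LhsNonVar (ρ : CRule F V) : Prop := ∀ x : V, ρ.lhs ≠ .var x

/-- Renaming the variables of a rule. -/
def mapV (g : V → W) (ρ : CRule F V) : CRule F W :=
  ⟨ρ.lhs.rename g, ρ.rhs.rename g, ρ.conds.map (fun c => (c.1.rename g, c.2.rename g))⟩

end CRule

/-- `R` is a deterministic CTRS (of Type 3, left-hand sides non-variable). -/
def IsDCTRS {F V : Type} [DecidableEq V] (R : CTRS F V) : Prop :=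
  ∀ ρ ∈ R, ρ.Det ∧ ρ.Type3 ∧ ρ.LhsNonVar

/-- All rules of `R` are weakly left-linear. -/
def IsWLL {F V : Type} [DecidableEq V] (R : CTRS F V) : Prop := ∀ ρ ∈ R, ρ.WLL

/-- Closure of a relation under contexts (rewriting below the root). -/
inductive CtxStep {F V : Type} (root : Term F V → Term F V → Prop) :
    Term F V → Term F V → Prop where
  | root {s t : Term F V} : root s t → CtxStep root s t
  | congr {f : F} {pre post : List (Term F V)} {s t : Term F V} :
      CtxStep root s t →
      CtxStep root (.app f (pre ++ s :: post)) (.app f (pre ++ t :: post))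

/-- A root rewrite step using a rule of `R`, conditions evaluated with `prev`. -/
def RootStep {F V : Type} (R : CTRS F V) (prev : Term F V → Term F V → Prop)
    (s t : Term F V) : Prop :=
  ∃ ρ ∈ R, ∃ σ : V → Term F V,
    s = ρ.lhs.subst σ ∧ t = ρ.rhs.subst σ ∧
    ∀ c ∈ ρ.conds, Relation.ReflTransGen prev (c.1.subst σ) (c.2.subst σ)

/-- The level-stratified reduction relation `→_{(n),R}`. -/
def LevelStep {F V : Type} (R : CTRS F V) : ℕ → Term F V → Term F V → Prop
  | 0 => fun _ _ => False
  | n + 1 => CtxStep (RootStep R (LevelStep R n))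

/-- The reduction relation `→_R = ⋃_{n} →_{(n),R}`. -/
def Red {F V : Type} (R : CTRS F V) (s t : Term F V) : Prop :=
  ∃ n : ℕ, LevelStep R n s t

/-- Many-step reduction `→*_R`. -/
def RedStar {F V : Type} (R : CTRS F V) : Term F V → Term F V → Prop :=
  Relation.ReflTransGen (Red R)

/-- `n`-fold composition of a relation. -/
def NFold {α : Type} (r : α → α → Prop) : ℕ → α → α → Prop
  | 0 => fun a b => a = b
  | n + 1 => fun a c => ∃ b, r a b ∧ NFold r n b c

/-- One-hole contexts. -/
inductive Ctx (F V : Type) : Type where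
  | hole : Ctx F V
  | app : F → List (Term F V) → Ctx F V → List (Term F V) → Ctx F V

/-- Filling the hole of a context with a term. -/
def Ctx.fill {F V : Type} : Ctx F V → Term F V → Term F V
  | .hole, t => t
  | .app f pre C post, t => .app f (pre ++ C.fill t :: post)
/-- Signature extended with the fresh symbols `U^ρ_i`. -/
abbrev UF (F V : Type) := F ⊕ (CRule F V × ℕ)

/-- Embedding of terms over `F` into terms over the extended signature `U_R(F)`. -/
def liftF {F V : Type} (t : Term F V) : Term (UF F V) V := t.mapF Sum.inl

/-- The list `X⃗_i` enumerating `Var(l, t1, …, t_{i−1})` in a fixed order. -/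
def Xlist {F V : Type} [DecidableEq V] (ρ : CRule F V) (i : ℕ) : List V :=
  (ρ.lhs.varList ++ ((ρ.conds.take (i - 1)).map Prod.snd).flatMap Term.varList).dedup

/-- A dummy condition (used as a default, never relevant). -/
def dummyCond {F V : Type} (ρ : CRule F V) : Term F V × Term F V := (ρ.lhs, ρ.lhs)

/-- The term `U^ρ_i(t, X⃗_i)`. -/
def uterm {F V : Type} [DecidableEq V] (ρ : CRule F V) (i : ℕ) (t : Term F V) :
    Term (UF F V) V :=
  .app (Sum.inr (ρ, i)) (liftF t :: (Xlist ρ i).map Term.var)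

/-- Left-hand side of the `j`-th unraveled rule of `ρ` (j = 0, …, k). -/
def ulhs {F V : Type} [DecidableEq V] (ρ : CRule F V) (j : ℕ) : Term (UF F V) V :=
  if j = 0 then liftF ρ.lhs
  else uterm ρ j (ρ.conds.getD (j - 1) (dummyCond ρ)).2

/-- Right-hand side of the `j`-th unraveled rule of `ρ` (j = 0, …, k). -/
def urhs {F V : Type} [DecidableEq V] (ρ : CRule F V) (j : ℕ) : Term (UF F V) V :=
  if j = ρ.conds.length then liftF ρ.rhs
  else uterm ρ (j + 1) (ρ.conds.getD j (dummyCond ρ)).1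

/-- The unconditional rules `U(ρ)` obtained by unraveling the rule `ρ`. -/
def URules {F V : Type} [DecidableEq V] (ρ : CRule F V) : Set (CRule (UF F V) V) :=
  { r | ∃ j ≤ ρ.conds.length, r = ⟨ulhs ρ j, urhs ρ j, []⟩ }

/-- The simultaneous unraveling `U(R)` of a DCTRS `R`. -/
def USys {F V : Type} [DecidableEq V] (R : CTRS F V) : CTRS (UF F V) V :=
  ⋃ ρ ∈ R, URules ρ

/-- `R` is ultra-WLL (`U`-WLL): every rule of `U(R)` is WLL. -/
def IsUWLL {F V : Type} [DecidableEq V] (R : CTRS F V) : Prop :=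
  ∀ r ∈ USys R, r.WLL
/-- Variables used for terms over the extended signature `F̄`: original
variables plus a countable supply of fresh variables. -/
abbrev WVar (V : Type) := V ⊕ ℕ

/-- The extended signature `F̄` of the SR transformation: the original symbols
(`c̄` for constructors, `f̄` for defined symbols, with extra arguments appended),
the fresh constant `⊥`, the fresh unary symbol `⟨·⟩`, and the fresh tuple
symbols `[ ]^ρ_j`. -/
inductive SSym (F V : Type) : Type where
  | orig : F → SSym F V
  | bot : SSym F V
  | guard : SSym F V
  | tup : CRule F V → ℕ → SSym F V

/-- Terms over the extended signature `F̄`. -/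
abbrev STerm (F V : Type) := Term (SSym F V) (WVar V)

/-- The fresh constant `⊥`. -/
def botT {F V : Type} : STerm F V := .app .bot []

/-- The fresh unary symbol `⟨·⟩`. -/
def guardT {F V : Type} (t : STerm F V) : STerm F V := .app .guard [t]

/-- `t̄`: the embedding of `t ∈ T(F,V)` into `T(F̄,V)` in which all the extra
arguments of defined symbols are filled with `⊥`.  Here `mOf f` is the number
of conditional `f`-rules (0 for constructors). -/
def barT {F V : Type} (mOf : F → ℕ) : Term F V → STerm F V
  | .var x => .var (Sum.inl x)
  | .app f ts =>
      .app (.orig f)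
        ((ts.attach.map (fun ⟨t, _⟩ => barT mOf t)) ++ List.replicate (mOf f) botT)

mutual
/-- `ext(t)`: the embedding of `t ∈ T(F,V)` into `T(F̄,V)` in which the extra
arguments of defined symbols are filled with distinct fresh variables; a
counter is threaded through to keep the fresh variables distinct. -/
def extT {F V : Type} (mOf : F → ℕ) : Term F V → ℕ → STerm F V × ℕ
  | .var x, c => (.var (Sum.inl x), c)
  | .app f ts, c =>
      let p := extTList mOf ts c
      (.app (.orig f)
         (p.1 ++ (List.range (mOf f)).map (fun k => .var (Sum.inr (p.2 + k)))),
       p.2 + mOf f)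

/-- `ext` on lists of terms, threading the fresh-variable counter. -/
def extTList {F V : Type} (mOf : F → ℕ) : List (Term F V) → ℕ → List (STerm F V) × ℕ
  | [], c => ([], c)
  | t :: ts, c =>
      let p := extT mOf t c
      let q := extTList mOf ts p.2
      (p.1 :: q.1, q.2)
end

/-- The backtranslation `t̂`: the partial mapping erasing `⟨·⟩` and the extra
arguments of defined symbols, recovering a term over `F`. -/
def hatT {F V : Type} (ar : F → ℕ) : STerm F V → Option (Term F V)
  | .var (Sum.inl x) => some (.var x)
  | .var (Sum.inr _) => none
  | .app (.orig f) ts =>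
      Option.map (Term.app f)
        ((ts.take (ar f)).attach.mapM (fun t => hatT ar t.1))
  | .app .guard [t] => hatT ar t
  | .app _ _ => none
decreasing_by
  · have h1 : t.1 ∈ ts := List.mem_of_mem_take t.2
    have := List.sizeOf_lt_of_mem h1
    simp only [Term.app.sizeOf_spec]
    omega
  · simp
    omega

/-- Embedding of `T(F,V)` into the terms over the unraveling signature
`U_R(F)` with extended variables. -/
def liftUV {F V : Type} (t : Term F V) : Term (UF F V) (WVar V) :=
  (t.mapF Sum.inl).rename Sum.inl
/-- The list `V⃗_j` enumerating `Var(t1, …, t_{j−1})` in a fixed order. -/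
def Vlist {F V : Type} [DecidableEq V] (ρ : CRule F V) (j : ℕ) : List V :=
  (((ρ.conds.take (j - 1)).map Prod.snd).flatMap Term.varList).dedup

/-- The term `[⟨inner⟩, V⃗_j]^ρ_j` (used in the rewrite rules of `SR(R)`). -/
def tupT {F V : Type} [DecidableEq V] (ρ : CRule F V) (j : ℕ) (inner : STerm F V) :
    STerm F V :=
  .app (.tup ρ j) (guardT inner :: (Vlist ρ j).map (fun v => .var (Sum.inl v)))

/-- The `j`-th unconditional rule (j = 0, …, k) obtained by the SR
transformation from the `i`-th conditional `f`-rule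
`ρ : f(w1,…,wn) → r ⇐ s1 ≈ t1, …, sk ≈ tk` (where `i = idx ρ`). -/
def condSRRule {F V : Type} [DecidableEq V] (mOf : F → ℕ) (idx : CRule F V → ℕ)
    (ρ : CRule F V) (j : ℕ) : CRule (SSym F V) (WVar V) :=
  match ρ.lhs with
  | .var _ => ⟨barT mOf ρ.lhs, barT mOf ρ.rhs, []⟩  -- irrelevant (lhs is never a variable)
  | .app f ws =>
    let i := idx ρ
    let m := mOf f
    let p := extTList mOf ws 0
    let ws' := p.1
    let c0 := p.2
    let slot : STerm F V → List (STerm F V) := fun mid =>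
      (List.range m).map (fun q => if q = i - 1 then mid else .var (Sum.inr (c0 + q)))
    let k := ρ.conds.length
    ⟨(if j = 0 then
        Term.app (SSym.orig f) (ws' ++ slot botT)
      else
        Term.app (SSym.orig f)
          (ws' ++ slot (tupT ρ j (extT mOf (ρ.conds.getD (j - 1) (dummyCond ρ)).2 (c0 + m)).1))),
     (if j = k then
        guardT (barT mOf ρ.rhs)
      else
        Term.app (SSym.orig f)
          (ws' ++ slot (tupT ρ (j + 1) (barT mOf (ρ.conds.getD j (dummyCond ρ)).1)))),
     []⟩

/-- The unconditional rule `ext(l) → ⟨r̄⟩` obtained by the SR transformation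
from an unconditional rule `l → r`. -/
def uncondSRRule {F V : Type} (mOf : F → ℕ) (ρ : CRule F V) : CRule (SSym F V) (WVar V) :=
  ⟨(extT mOf ρ.lhs 0).1, guardT (barT mOf ρ.rhs), []⟩

/-- The auxiliary rule `⟨⟨x⟩⟩ → ⟨x⟩`. -/
def auxGuard {F V : Type} : CRule (SSym F V) (WVar V) :=
  ⟨guardT (guardT (.var (Sum.inr 0))), guardT (.var (Sum.inr 0)), []⟩

/-- The auxiliary rule shifting `⟨·⟩` upward over the `i`-th argument of the
symbol `f` (and resetting the extra arguments of defined symbols):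
`f̄(x1,…,⟨xi⟩,…,xn, z1,…,zm) → ⟨f̄(x1,…,xn, ⊥,…,⊥)⟩`. -/
def auxShift {F V : Type} (ar mOf : F → ℕ) (f : F) (i : ℕ) : CRule (SSym F V) (WVar V) :=
  ⟨Term.app (SSym.orig f)
     (((List.range (ar f)).map
         (fun q => if q = i then guardT (.var (Sum.inr q)) else .var (Sum.inr q))) ++
      (List.range (mOf f)).map (fun q => .var (Sum.inr (ar f + q)))),
   guardT (Term.app (SSym.orig f)
     (((List.range (ar f)).map (fun q => Term.var (Sum.inr q))) ++
      List.replicate (mOf f) botT)),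
   []⟩

/-- The SR transformation `SR(R)`: the unconditional TRS over `F̄` consisting of
the transformed rules of `R` together with the auxiliary rules `R_aux`. -/
def SRSys {F V : Type} [DecidableEq V] (R : CTRS F V) (ar mOf : F → ℕ)
    (idx : CRule F V → ℕ) : CTRS (SSym F V) (WVar V) :=
  { r | (∃ ρ ∈ R, ρ.conds = [] ∧ r = uncondSRRule mOf ρ) ∨
        (∃ ρ ∈ R, ρ.conds ≠ [] ∧ ∃ j ≤ ρ.conds.length, r = condSRRule mOf idx ρ j) ∨
        r = auxGuard ∨
        (∃ (f : F) (i : ℕ), i < ar f ∧ r = auxShift ar mOf f i) }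

/-- Well-formedness of the data `(ar, mOf, idx)` describing the signature `F`
(with arities `ar`), the number `mOf f` of conditional `f`-rules of `R`, and
the ranking `idx` of the conditional rules of each defined symbol by some
arbitrary but fixed order. -/
def GoodSetup {F V : Type} [DecidableEq V] (R : CTRS F V) (ar mOf : F → ℕ)
    (idx : CRule F V → ℕ) : Prop :=
  (∀ ρ ∈ R, ρ.lhs.WF ar ∧ ρ.rhs.WF ar ∧ ∀ c ∈ ρ.conds, c.1.WF ar ∧ c.2.WF ar) ∧
  (∀ ρ ∈ R, ∃ (f : F) (ws : List (Term F V)), ρ.lhs = Term.app f ws) ∧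
  (∀ ρ ∈ R, ρ.conds ≠ [] →
     ∀ (f : F) (ws : List (Term F V)), ρ.lhs = Term.app f ws →
       1 ≤ idx ρ ∧ idx ρ ≤ mOf f) ∧
  (∀ ρ₁, ρ₁ ∈ R → ∀ ρ₂, ρ₂ ∈ R → ρ₁.conds ≠ [] → ρ₂.conds ≠ [] →
     ∀ (f : F) (ws₁ ws₂ : List (Term F V)),
       ρ₁.lhs = Term.app f ws₁ → ρ₂.lhs = Term.app f ws₂ →
       idx ρ₁ = idx ρ₂ → ρ₁ = ρ₂) ∧
  (∀ (f : F) (i : ℕ), 1 ≤ i → i ≤ mOf f →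
     ∃ ρ ∈ R, ρ.conds ≠ [] ∧ (∃ ws : List (Term F V), ρ.lhs = Term.app f ws) ∧ idx ρ = i)
/-- The unraveled system `U(R)` with its rules considered over the extended
variable set `WVar V` (so that it rewrites the terms in the image of `Φ`). -/
def USysW {F V : Type} [DecidableEq V] (R : CTRS F V) : CTRS (UF F V) (WVar V) :=
  { r | ∃ r' ∈ USys R, r = r'.mapV Sum.inl }

/-- Membership in the set `Φ(t)`: `PhiMem R ar mOf idx t u` states that
`u ∈ Φ(t)`, where `Φ` is the mapping (defined mutually with the auxiliary
mapping `Ψ`) from reachable terms of `T(F̄,V)` to sets of terms of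
`T(U_R(F),V)`:
* `Φ(x) = {x}` for a variable `x`;
* `Φ(⟨t⟩) = Φ(t)`;
* for an original symbol `f` applied to arguments `ts`, `Φ` contains
  `f(t'1,…,t'n)` for all `t'p ∈ Φ(tp)` of the first `ar f` arguments (this is
  the clause for constructors and the clause `Ψ(f̄(t⃗,⊥,…,⊥))` for defined
  symbols), and
* for each `i`-th extra argument of a defined symbol `f` that is a tuple
  `[⟨t'⟩, t'1,…,t'_{nj}]^ρ_j` (where `ρ` is the `i`-th conditional `f`-rule),
  `Φ` contains all terms `U^ρ_j(u', u⃗')` with `u' ∈ Φ(t')` and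
  `u⃗' ∈ Φ(σ(X⃗j))`, where `σ` is a substitution with `σ(V⃗j) = t'1,…,t'_{nj}`
  and `σ(ext(w1),…,ext(wn))` equal to the main arguments of the node. -/
inductive PhiMem {F V : Type} [DecidableEq V] (R : CTRS F V) (ar mOf : F → ℕ)
    (idx : CRule F V → ℕ) : STerm F V → Term (UF F V) (WVar V) → Prop where
  | var (x : WVar V) : PhiMem R ar mOf idx (.var x) (.var x)
  | guard {t : STerm F V} {u : Term (UF F V) (WVar V)} :
      PhiMem R ar mOf idx t u → PhiMem R ar mOf idx (guardT t) u
  | orig {f : F} {ts : List (STerm F V)} {us : List (Term (UF F V) (WVar V))} :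
      us.length = (ts.take (ar f)).length →
      (∀ p ∈ List.zip (ts.take (ar f)) us, PhiMem R ar mOf idx p.1 p.2) →
      PhiMem R ar mOf idx (.app (.orig f) ts) (.app (Sum.inl f) us)
  | cond {f : F} {ts : List (STerm F V)} {ρ : CRule F V} {ws : List (Term F V)}
      {j : ℕ} {tin : STerm F V} {vargs : List (STerm F V)}
      {σ : WVar V → STerm F V} {u : Term (UF F V) (WVar V)}
      {us : List (Term (UF F V) (WVar V))} :
      ρ ∈ R → ρ.conds ≠ [] → ρ.lhs = .app f ws →
      1 ≤ j → j ≤ ρ.conds.length →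
      (ts.drop (ar f))[idx ρ - 1]? = some (.app (.tup ρ j) (guardT tin :: vargs)) →
      (Vlist ρ j).map (fun v => σ (Sum.inl v)) = vargs →
      (extTList mOf ws 0).1.map (Term.subst σ) = ts.take (ar f) →
      PhiMem R ar mOf idx tin u →
      us.length = (Xlist ρ j).length →
      (∀ p ∈ List.zip (Xlist ρ j) us, PhiMem R ar mOf idx (σ (Sum.inl p.1)) p.2) →
      PhiMem R ar mOf idx (.app (.orig f) ts) (.app (Sum.inr (ρ, j)) (u :: us))

/-- The set `Φ(t)`. -/
def Phi {F V : Type} [DecidableEq V] (R : CTRS F V) (ar mOf : F → ℕ)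
    (idx : CRule F V → ℕ) (t : STerm F V) : Set (Term (UF F V) (WVar V)) :=
  { u | PhiMem R ar mOf idx t u }

/-- `σ' ∈ Φ(σ)`, the extension of `Φ` to substitutions:
`Dom(σ') ⊆ Dom(σ)` and `xσ' ∈ Φ(xσ)` for every `x ∈ Dom(σ)`. -/
def PhiSub {F V : Type} [DecidableEq V] (R : CTRS F V) (ar mOf : F → ℕ)
    (idx : CRule F V → ℕ) (σ : WVar V → STerm F V)
    (σ' : WVar V → Term (UF F V) (WVar V)) : Prop :=
  ∀ x : WVar V, PhiMem R ar mOf idx (σ x) (σ' x)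

/-- The relation `s ⇝ t`: for each `t' ∈ Φ(t)` there exists `s' ∈ Φ(s)` with
`s' →*_{U(R)} t'`. -/
def Leadsto {F V : Type} [DecidableEq V] (R : CTRS F V) (ar mOf : F → ℕ)
    (idx : CRule F V → ℕ) (s t : STerm F V) : Prop :=
  ∀ u, PhiMem R ar mOf idx t u →
    ∃ u', PhiMem R ar mOf idx s u' ∧ RedStar (USysW R) u' u

/-- A term of `T(F̄,V)` is reachable if it is a subterm of some term reachable
by `SR(R)` from `⟨s̄⟩` for some `s ∈ T(F,V)`. -/
def SRReachable {F V : Type} [DecidableEq V] (R : CTRS F V) (ar mOf : F → ℕ)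
    (idx : CRule F V → ℕ) (t : STerm F V) : Prop :=
  ∃ (s : Term F V) (C : Ctx (SSym F V) (WVar V)),
    s.WF ar ∧ RedStar (SRSys R ar mOf idx) (guardT (barT mOf s)) (C.fill t)

/-- The restriction `σ|_X` of a substitution to the variables of a term `t`. -/
def restrictTo {F V : Type} [DecidableEq V] (σ : WVar V → STerm F V) (t : STerm F V) :
    WVar V → STerm F V :=
  fun x => if 0 < t.count x then σ x else .var x

section Helpers

variable {F V : Type} [DecidableEq V]

theorem h_count_app {G W : Type} [DecidableEq W] (x : W) (f : G) (ts : List (Term G W)) :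
    Term.count x (.app f ts) = seqCount x ts := by
  rw [Term.count, seqCount]
  congr 1
  simp

theorem h_count_var {G W : Type} [DecidableEq W] (x y : W) :
    Term.count x (.var y : Term G W) = if y = x then 1 else 0 := by
  rw [Term.count]

theorem h_seq_nil {G W : Type} [DecidableEq W] (x : W) :
    seqCount x ([] : List (Term G W)) = 0 := rfl

theorem h_seq_cons {G W : Type} [DecidableEq W] (x : W) (t : Term G W) (ts : List (Term G W)) :
    seqCount x (t :: ts) = Term.count x t + seqCount x ts := by
  simp [seqCount]

theorem h_seq_append {G W : Type} [DecidableEq W] (x : W) (ts us : List (Term G W)) :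
    seqCount x (ts ++ us) = seqCount x ts + seqCount x us := by
  simp [seqCount]

mutual
theorem h_count_mapF {G W H : Type} [DecidableEq W] (g : G → H) (x : W) :
    ∀ t : Term G W, Term.count x (t.mapF g) = Term.count x t
  | .var y => by simp [Term.mapF, Term.count]
  | .app f ts => by
      rw [Term.mapF, h_count_app, h_count_app, ← h_count_mapFs g x ts]
      congr 1
      simp
theorem h_count_mapFs {G W H : Type} [DecidableEq W] (g : G → H) (x : W) :
    ∀ ts : List (Term G W), seqCount x (ts.map (Term.mapF g)) = seqCount x ts
  | [] => rfl
  | t :: ts => by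
      rw [List.map_cons, h_seq_cons, h_seq_cons, h_count_mapF g x t, h_count_mapFs g x ts]
end

mutual
theorem h_varList {G W : Type} [DecidableEq W] (x : W) :
    ∀ t : Term G W, t.varList.count x = Term.count x t
  | .var y => by simp [Term.varList, Term.count, List.count_singleton]
  | .app f ts => by
      rw [Term.varList, h_count_app, ← h_varLists x ts]
      congr 1
      simp
theorem h_varLists {G W : Type} [DecidableEq W] (x : W) :
    ∀ ts : List (Term G W), (ts.flatMap Term.varList).count x = seqCount x ts
  | [] => rfl
  | t :: ts => by
      rw [List.flatMap_cons, h_seq_cons, List.count_append, h_varList x t, h_varLists x ts]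
end

theorem h_seq_vars {G W X : Type} [DecidableEq W] [DecidableEq X] (g : X → W)
    (hg : Function.Injective g) (x : X) (L : List X) :
    seqCount (g x) (L.map (fun v => (.var (g v) : Term G W))) = L.count x := by
  induction L with
  | nil => rfl
  | cons y L ih =>
    rw [List.map_cons, h_seq_cons, ih, h_count_var, List.count_cons]
    simp [add_comm, hg.eq_iff]

theorem h_dedup {X : Type} [DecidableEq X] (x : X) (L : List X) :
    L.dedup.count x = min 1 (L.count x) := by
  rw [List.count_dedup]
  split_ifs with h
  · have := List.count_pos_iff.2 h; omega
  · have := List.count_eq_zero.2 h; omega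

theorem h_replicate {G W : Type} [DecidableEq W] (x : W) (n : ℕ) (t : Term G W)
    (ht : Term.count x t = 0) : seqCount x (List.replicate n t) = 0 := by
  simp [seqCount, ht]

theorem h_bot (x : WVar V) : Term.count x (botT : STerm F V) = 0 := by
  rw [botT, h_count_app]; rfl

theorem h_guard (x : WVar V) (t : STerm F V) :
    Term.count x (guardT t) = Term.count x t := by
  rw [guardT, h_count_app, h_seq_cons, h_seq_nil]; rfl

mutual
theorem h_bar (mOf : F → ℕ) (x : V) :
    ∀ t : Term F V, Term.count (Sum.inl x) (barT mOf t) = Term.count x t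
  | .var y => by simp [barT, Term.count]
  | .app f ts => by
      rw [barT, h_count_app, h_count_app, h_seq_append, h_replicate _ _ _ (h_bot _),
        ← h_bars mOf x ts, add_zero]
      congr 1
      simp
theorem h_bars (mOf : F → ℕ) (x : V) :
    ∀ ts : List (Term F V), seqCount (Sum.inl x) (ts.map (barT mOf)) = seqCount x ts
  | [] => rfl
  | t :: ts => by
      rw [List.map_cons, h_seq_cons, h_seq_cons, h_bar mOf x t, h_bars mOf x ts]
end

mutual
theorem h_barr (mOf : F → ℕ) (n : ℕ) :
    ∀ t : Term F V, Term.count (Sum.inr n) (barT mOf t) = 0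
  | .var y => by simp [barT, Term.count]
  | .app f ts => by
      rw [barT, h_count_app, h_seq_append, h_replicate _ _ _ (h_bot _),
        add_zero]
      refine Eq.trans ?_ (h_barrs mOf n ts)
      congr 1
      simp
theorem h_barrs (mOf : F → ℕ) (n : ℕ) :
    ∀ ts : List (Term F V), seqCount (Sum.inr n) (ts.map (barT mOf)) = 0
  | [] => rfl
  | t :: ts => by
      rw [List.map_cons, h_seq_cons, h_barr mOf n t, h_barrs mOf n ts]
end

theorem h_fresh_inl (x : V) (c m : ℕ) :
    seqCount (Sum.inl x) ((List.range m).map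
      (fun k => (.var (Sum.inr (c + k)) : STerm F V))) = 0 := by
  simp [seqCount, Term.count, Function.comp_def]

theorem h_fresh_inr (n : ℕ) (c m : ℕ) :
    seqCount (Sum.inr n) ((List.range m).map
      (fun k => (.var (Sum.inr (c + k)) : STerm F V))) =
      if c ≤ n ∧ n < c + m then 1 else 0 := by
  induction m with
  | zero => rw [if_neg (by omega)]; rfl
  | succ m ih =>
    rw [List.range_succ, List.map_append, h_seq_append, ih, List.map_singleton, h_seq_cons,
      h_seq_nil, h_count_var]
    simp only [Sum.inr.injEq]
    split_ifs <;> omega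

mutual
theorem h_ext (mOf : F → ℕ) (x : V) :
    ∀ (t : Term F V) (c : ℕ), Term.count (Sum.inl x) (extT mOf t c).1 = Term.count x t
  | .var y, c => by simp [extT, Term.count]
  | .app f ts, c => by
      rw [extT, h_count_app, h_count_app, h_seq_append, h_fresh_inl, h_exts mOf x ts c, add_zero]
theorem h_exts (mOf : F → ℕ) (x : V) :
    ∀ (ts : List (Term F V)) (c : ℕ),
      seqCount (Sum.inl x) (extTList mOf ts c).1 = seqCount x ts
  | [], c => by rw [extTList]; rfl
  | t :: ts, c => by
      rw [extTList, h_seq_cons, h_seq_cons, h_ext mOf x t, h_exts mOf x ts]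
end

mutual
theorem h_extr (mOf : F → ℕ) (n : ℕ) :
    ∀ (t : Term F V) (c : ℕ), c ≤ (extT mOf t c).2 ∧
      Term.count (Sum.inr n) (extT mOf t c).1 = if c ≤ n ∧ n < (extT mOf t c).2 then 1 else 0
  | .var y, c => by
      rw [extT]
      refine ⟨le_rfl, ?_⟩
      rw [h_count_var, if_neg (by simp), if_neg (by simp only; omega)]
  | .app f ts, c => by
      have := h_extrs mOf n ts c
      rw [extT]
      refine ⟨by simp only; omega, ?_⟩
      rw [h_count_app, h_seq_append, h_fresh_inr, this.2]
      have := this.1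
      simp only
      split_ifs <;> omega
theorem h_extrs (mOf : F → ℕ) (n : ℕ) :
    ∀ (ts : List (Term F V)) (c : ℕ), c ≤ (extTList mOf ts c).2 ∧
      seqCount (Sum.inr n) (extTList mOf ts c).1 =
        if c ≤ n ∧ n < (extTList mOf ts c).2 then 1 else 0
  | [], c => by rw [extTList]; simp [h_seq_nil]
  | t :: ts, c => by
      have h1 := h_extr mOf n t c
      have h2 := h_extrs mOf n ts (extT mOf t c).2
      rw [extTList]
      refine ⟨by simp only; omega, ?_⟩
      rw [h_seq_cons, h1.2, h2.2]
      have := h1.1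
      have := h2.1
      simp only
      split_ifs <;> omega
end

theorem h_slot_gen (x : WVar V) (i c m : ℕ) (mid : STerm F V) :
    seqCount x ((List.range m).map
      (fun q => if q = i then mid else (.var (Sum.inr (c + q)) : STerm F V))) =
    (if i < m then Term.count x mid else 0) +
    seqCount x ((List.range m).map
      (fun q => if q = i then botT else (.var (Sum.inr (c + q)) : STerm F V))) := by
  induction m with
  | zero => rfl
  | succ m ih =>
    rw [List.range_succ, List.map_append, List.map_append, h_seq_append, h_seq_append, ih,
      List.map_singleton, List.map_singleton, h_seq_cons, h_seq_cons,
      h_seq_nil]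
    by_cases h : m = i
    · subst h; simp [h_bot]; omega
    · rw [if_neg h, if_neg h]
      split_ifs <;> omega

theorem h_slot_inl (x : V) (i c m : ℕ) :
    seqCount (Sum.inl x) ((List.range m).map
      (fun q => if q = i then botT else (.var (Sum.inr (c + q)) : STerm F V))) = 0 := by
  induction m with
  | zero => rfl
  | succ m ih =>
    rw [List.range_succ, List.map_append, h_seq_append, ih,
      List.map_singleton, h_seq_cons, h_seq_nil]
    split_ifs <;> simp [h_bot, h_count_var]

theorem h_slot_inr (n : ℕ) (i c m : ℕ) :
    seqCount (Sum.inr n) ((List.range m).map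
      (fun q => if q = i then botT else (.var (Sum.inr (c + q)) : STerm F V))) =
      if c ≤ n ∧ n < c + m ∧ n ≠ c + i then 1 else 0 := by
  induction m with
  | zero => rw [if_neg (by omega)]; rfl
  | succ m ih =>
    rw [List.range_succ, List.map_append, h_seq_append, ih,
      List.map_singleton, h_seq_cons, h_seq_nil]
    by_cases h : m = i
    · rw [if_pos h, h_bot]
      split_ifs <;> omega
    · rw [if_neg h, h_count_var]
      simp only [Sum.inr.injEq]
      split_ifs <;> omega

theorem h_wll {G W : Type} [DecidableEq W] (l r : Term G W) :
    (⟨l, r, []⟩ : CRule G W).WLL ↔ ∀ x, 0 < Term.count x r → Term.count x l = 1 := by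
  simp [CRule.WLL, CRule.srcs, CRule.pats, h_seq_cons, h_seq_nil]

/-- cumulative counts -/
def hS (x : V) (ρ : CRule F V) (j : ℕ) : ℕ := seqCount x ((ρ.conds.take j).map Prod.snd)

theorem hS_succ (x : V) (ρ : CRule F V) (j : ℕ) (hj : j < ρ.conds.length) :
    hS x ρ (j+1) = hS x ρ j + Term.count x (ρ.conds.getD j (dummyCond ρ)).2 := by
  rw [hS, List.take_succ_eq_append_getElem hj, List.map_append, h_seq_append,
    List.getD_eq_getElem _ _ hj, List.map_singleton, h_seq_cons, h_seq_nil]; rfl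

theorem h_X (x : V) (ρ : CRule F V) (j : ℕ) :
    (Xlist ρ j).count x = min 1 (Term.count x ρ.lhs + hS x ρ (j-1)) := by
  rw [Xlist, h_dedup, List.count_append, h_varList, h_varLists, hS]

theorem h_V (x : V) (ρ : CRule F V) (j : ℕ) :
    (Vlist ρ j).count x = min 1 (hS x ρ (j-1)) := by
  rw [Vlist, h_dedup, h_varLists, hS]

theorem h_uterm (x : V) (ρ : CRule F V) (j : ℕ) (t : Term F V) :
    Term.count x (uterm ρ j t) =
      Term.count x t + min 1 (Term.count x ρ.lhs + hS x ρ (j-1)) := by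
  rw [uterm, h_count_app, h_seq_cons, liftF, h_count_mapF, ← h_X]
  congr 1
  exact h_seq_vars (fun v => v) (fun _ _ h => h) x _

theorem h_tup_inl (x : V) (ρ : CRule F V) (j : ℕ) (t : STerm F V) :
    Term.count (Sum.inl x) (tupT ρ j t) =
      Term.count (Sum.inl x) t + min 1 (hS x ρ (j-1)) := by
  rw [tupT, h_count_app, h_seq_cons, h_guard, ← h_V]
  congr 1
  exact h_seq_vars (W := WVar V) Sum.inl Sum.inl_injective x _

theorem h_tup_inr (n : ℕ) (ρ : CRule F V) (j : ℕ) (t : STerm F V) :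
    Term.count (Sum.inr n) (tupT ρ j t) = Term.count (Sum.inr n) t := by
  rw [tupT, h_count_app, h_seq_cons, h_guard]
  simp [seqCount, Term.count, Function.comp_def]

theorem h_arith (a k rr : ℕ) (S c s : ℕ → ℕ) (h0 : S 0 = 0)
    (hc : ∀ j < k, S (j+1) = S j + c j)
    (hd : ∀ j < k, 0 < s j → 0 < a + S j) :
    (∀ j ≤ k, 0 < (if j = k then rr else s j + min 1 (a + S j)) →
      (if j = 0 then a else c (j-1) + min 1 (a + S (j-1))) = 1) ↔
    (∀ j ≤ k, 0 < (if j = k then rr else a + (s j + min 1 (S j))) →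
      (if j = 0 then a else a + (c (j-1) + min 1 (S (j-1)))) = 1) := by
  have key : (∀ j < k, a + S j ≤ 1) → ((∀ j ≤ k, 0 < (if j = k then rr else s j + min 1 (a + S j)) →
      (if j = 0 then a else c (j-1) + min 1 (a + S (j-1))) = 1) ↔
    (∀ j ≤ k, 0 < (if j = k then rr else a + (s j + min 1 (S j))) →
      (if j = 0 then a else a + (c (j-1) + min 1 (S (j-1)))) = 1)) := by
    intro H
    refine forall_congr' fun j => forall_congr' fun hj => ?_
    rcases j with _ | j
    · rcases k with _ | k
      · simp
      · have := hd 0 (by omega); simp; omega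
    · have := H j (by omega)
      simp only [Nat.add_sub_cancel, Nat.succ_ne_zero, if_false]
      by_cases hk : j + 1 = k
      · rw [if_pos hk, if_pos hk]; omega
      · have := hd (j+1) (by omega); rw [if_neg hk, if_neg hk]; omega
  constructor
  · intro h
    refine (key ?_).1 h
    intro j
    induction j with
    | zero => intro hj; have := h 0 (by omega); rw [if_neg (by omega), if_pos rfl] at this; omega
    | succ j ih =>
      intro hj
      have := ih (by omega)
      have h3 := hc j (by omega)
      have := h (j+1) (by omega); rw [if_neg (by omega), if_neg (by omega)] at this
      simp only [Nat.add_sub_cancel] at this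
      omega
  · intro h
    refine (key ?_).2 h
    intro j
    induction j with
    | zero => intro hj; have := h 0 (by omega); rw [if_neg (by omega), if_pos rfl] at this; omega
    | succ j ih =>
      intro hj
      have := ih (by omega)
      have h3 := hc j (by omega)
      have := h (j+1) (by omega); rw [if_neg (by omega), if_neg (by omega)] at this
      simp only [Nat.add_sub_cancel] at this
      omega

theorem h_U (ρ : CRule F V) :
    (∀ r ∈ URules ρ, r.WLL) ↔ ∀ x : V, ∀ j ≤ ρ.conds.length,
      0 < (if j = ρ.conds.length then Term.count x ρ.rhs else
        Term.count x (ρ.conds.getD j (dummyCond ρ)).1 + min 1 (Term.count x ρ.lhs + hS x ρ j)) →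
      (if j = 0 then Term.count x ρ.lhs else
        Term.count x (ρ.conds.getD (j-1) (dummyCond ρ)).2 +
          min 1 (Term.count x ρ.lhs + hS x ρ (j-1))) = 1 := by
  have : (∀ r ∈ URules ρ, r.WLL) ↔ ∀ j ≤ ρ.conds.length, ∀ x : V,
      0 < Term.count x (urhs ρ j) → Term.count x (ulhs ρ j) = 1 := by
    constructor
    · intro h j hj
      exact (h_wll _ _).1 (h _ ⟨j, hj, rfl⟩)
    · rintro h _ ⟨j, hj, rfl⟩
      exact (h_wll _ _).2 (h j hj)
  rw [this]
  have e1 : ∀ j x, Term.count x (urhs ρ j) = (if j = ρ.conds.length then Term.count x ρ.rhs else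
        Term.count x (ρ.conds.getD j (dummyCond ρ)).1 +
          min 1 (Term.count x ρ.lhs + hS x ρ j)) := by
    intro j x
    rw [urhs]
    split_ifs
    · rw [liftF, h_count_mapF]
    · rw [h_uterm]; rfl
  have e2 : ∀ j x, Term.count x (ulhs ρ j) = (if j = 0 then Term.count x ρ.lhs else
        Term.count x (ρ.conds.getD (j-1) (dummyCond ρ)).2 +
          min 1 (Term.count x ρ.lhs + hS x ρ (j-1))) := by
    intro j x
    rw [ulhs]
    split_ifs
    · rw [liftF, h_count_mapF]
    · rw [h_uterm]
  simp only [e1, e2]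
  exact ⟨fun h x j hj => h j hj x, fun h j hj x => h x j hj⟩

theorem h_SR (mOf : F → ℕ) (idx : CRule F V → ℕ) (ρ : CRule F V) (f : F)
    (ws : List (Term F V)) (hl : ρ.lhs = .app f ws) (hi : 1 ≤ idx ρ) (hm : idx ρ ≤ mOf f)
    (j : ℕ) :
    (condSRRule mOf idx ρ j).WLL ↔ ∀ x : V,
      0 < (if j = ρ.conds.length then Term.count x ρ.rhs else Term.count x ρ.lhs +
        (Term.count x (ρ.conds.getD j (dummyCond ρ)).1 + min 1 (hS x ρ j))) →
      (if j = 0 then Term.count x ρ.lhs else Term.count x ρ.lhs +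
        (Term.count x (ρ.conds.getD (j-1) (dummyCond ρ)).2 +
          min 1 (hS x ρ (j-1)))) = 1 := by
  have hlt : idx ρ - 1 < mOf f := by omega
  unfold condSRRule
  split
  · rename_i y hy; rw [hy] at hl; cases hl
  rename_i f' ws' hf
  rw [hf] at hl
  cases hl
  simp only
  rw [h_wll]
  have hlc : ∀ x, Term.count x ρ.lhs = seqCount x ws := fun x => by rw [hf, h_count_app]
  rw [Sum.forall]
  have hr : ∀ n : ℕ, _ := fun n => ((h_extrs mOf n ws 0).2)
  rw [and_iff_left]
  · refine forall_congr' fun x => ?_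
    apply iff_of_eq
    congr 2
    · split_ifs
      · rw [h_guard, h_bar]
      · rw [h_count_app, h_seq_append, h_exts, h_slot_gen, h_slot_inl, if_pos hlt, h_tup_inl,
          h_bar, hlc]; rfl
    · split_ifs
      · rw [h_count_app, h_seq_append, h_exts, h_slot_inl, hlc]; rfl
      · rw [h_count_app, h_seq_append, h_exts, h_slot_gen, h_slot_inl, if_pos hlt, h_tup_inl,
          h_ext, hlc]; rfl
  · intro n
    by_cases hk : j = ρ.conds.length
    · rw [if_pos hk, h_guard, h_barr]; omega
    rw [if_neg hk, h_count_app, h_seq_append, hr, h_slot_gen, h_slot_inr, if_pos hlt, h_tup_inr,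
      h_barr]
    by_cases h0 : j = 0
    · rw [if_pos h0, h_count_app, h_seq_append, hr, h_slot_inr]
      split_ifs <;> omega
    · rw [if_neg h0, h_count_app, h_seq_append, hr, h_slot_gen, h_slot_inr, if_pos hlt, h_tup_inr,
        (h_extr mOf n _ _).2]
      split_ifs <;> omega

theorem h_uncond (mOf : F → ℕ) (ρ : CRule F V) :
    (uncondSRRule mOf ρ).WLL ↔ ∀ x : V, 0 < Term.count x ρ.rhs → Term.count x ρ.lhs = 1 := by
  rw [uncondSRRule, h_wll, Sum.forall, and_iff_left]
  · simp only [h_guard, h_bar, h_ext]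
  · intro n; rw [h_guard, h_barr]; omega

theorem h_auxGuard : (auxGuard : CRule (SSym F V) (WVar V)).WLL := by
  rw [auxGuard, h_wll]
  intro x
  rw [h_guard, h_guard, h_guard, h_count_var]
  split_ifs <;> omega

theorem h_auxShift (ar mOf : F → ℕ) (f : F) (i : ℕ) :
    (auxShift ar mOf f i : CRule (SSym F V) (WVar V)).WLL := by
  rw [auxShift, h_wll]
  intro x
  have e : seqCount x ((List.range (ar f)).map
         (fun q => if q = i then guardT (.var (Sum.inr q)) else (.var (Sum.inr q) : STerm F V)))
      = seqCount x ((List.range (ar f)).map (fun q => (.var (Sum.inr (0 + q)) : STerm F V))) := by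
    rw [seqCount, seqCount, List.map_map, List.map_map]
    congr 2
    funext q
    simp only [Function.comp, zero_add]
    split_ifs
    · rw [h_guard]
    · rfl
  rw [h_guard, h_count_app, h_count_app, h_seq_append, h_seq_append, e,
    h_replicate _ _ _ (h_bot _)]
  have e2 : (List.range (ar f)).map (fun q => (Term.var (Sum.inr q) : STerm F V)) =
    (List.range (ar f)).map (fun q => (.var (Sum.inr (0 + q)) : STerm F V)) := by simp
  rw [e2]
  rcases x with x | n
  · rw [h_fresh_inl]; omega
  · rw [h_fresh_inr, h_fresh_inr]
    split_ifs <;> omega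

theorem h_rule (mOf : F → ℕ) (idx : CRule F V → ℕ) (ρ : CRule F V) (hD : ρ.Det)
    (hL : ∃ (f : F) (ws : List (Term F V)), ρ.lhs = Term.app f ws)
    (hI : ρ.conds ≠ [] →
     ∀ (f : F) (ws : List (Term F V)), ρ.lhs = Term.app f ws →
       1 ≤ idx ρ ∧ idx ρ ≤ mOf f) :
    (∀ r ∈ URules ρ, r.WLL) ↔
      ((ρ.conds = [] → (uncondSRRule mOf ρ).WLL) ∧
       (ρ.conds ≠ [] → ∀ j ≤ ρ.conds.length, (condSRRule mOf idx ρ j).WLL)) := by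
  rw [h_U]
  by_cases hc : ρ.conds = []
  · rw [and_iff_left (fun h => absurd hc h), h_uncond]
    simp [hc]
  · rw [and_iff_right (fun h => absurd h hc)]
    obtain ⟨f, ws, hl⟩ := hL
    obtain ⟨h1, h2⟩ := hI hc f ws hl
    simp only [h_SR mOf idx ρ f ws hl h1 h2, hc, ne_eq, not_false_eq_true, true_imp_iff]
    have : ∀ x : V, _ := fun x => h_arith (Term.count x ρ.lhs) ρ.conds.length
      (Term.count x ρ.rhs) (hS x ρ)
      (fun j => Term.count x (ρ.conds.getD j (dummyCond ρ)).2)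
      (fun j => Term.count x (ρ.conds.getD j (dummyCond ρ)).1) (by simp [hS, h_seq_nil])
      (fun j hj => hS_succ x ρ j hj) (by
        intro j hj h
        have := hD j hj x (by
          simp only [List.getD_eq_getElem _ _ hj] at h; exact h)
        rwa [h_seq_cons] at this)
    exact ⟨fun h j hj x => (this x).1 (h x) j hj, fun h x => (this x).2 fun j hj => h j hj x⟩

end Helpers

/-- **`R` is `U`-WLL iff `SR(R)` is WLL.** -/
theorem UWLL_iff_SR_WLL {F V : Type} [DecidableEq V]
    (R : CTRS F V) (ar mOf : F → ℕ) (idx : CRule F V → ℕ)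
    (hS : GoodSetup R ar mOf idx) (hD : IsDCTRS R) :
    IsUWLL R ↔ (∀ r ∈ SRSys R ar mOf idx, r.WLL) := by
  obtain ⟨-, hL, hI, -, -⟩ := hS
  have key : ∀ ρ ∈ R, _ := fun ρ hρ => h_rule mOf idx ρ (hD ρ hρ).1 (hL ρ hρ) (hI ρ hρ)
  constructor
  · intro h
    have h' : ∀ ρ ∈ R, ∀ r ∈ URules ρ, r.WLL := fun ρ hρ r hr =>
      h r (Set.mem_biUnion hρ hr)
    rintro r (⟨ρ, hρ, hc, rfl⟩ | ⟨ρ, hρ, hc, j, hj, rfl⟩ | rfl | ⟨f, i, -, rfl⟩)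
    · exact ((key ρ hρ).1 (h' ρ hρ)).1 hc
    · exact ((key ρ hρ).1 (h' ρ hρ)).2 hc j hj
    · exact h_auxGuard
    · exact h_auxShift ar mOf f i
  · intro h r hr
    obtain ⟨ρ, hρ, hr⟩ := Set.mem_iUnion₂.1 hr
    refine (key ρ hρ).2 ⟨fun hc => h _ (Or.inl ⟨ρ, hρ, hc, rfl⟩), fun hc j hj =>
      h _ (Or.inr (Or.inl ⟨ρ, hρ, hc, j, hj, rfl⟩))⟩ r hr
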